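/- arXiv:2005.00984 — 2 statements merged into one kernel-verified Lean document; each statement's English description precedes it below -/
import Mathlib

section
/- For every integer k ≥ 1 and every integer s with −(k−1) ≤ s ≤ k−1, the limit as n → ∞ of |A_{2k,s}| / n^{2k−1} equals (1/(2k−1)!) Σ_{j=0}^{k+s−1} (−1)^j C(2k, j) (k+s−j)^{2k−1}. -/
/-!
Replacing `i_r` by `n - i_r` where it carries the sign `-1`, and by `i_r - 1` where it carries the
sign `+1`, turns `A_{2k,s}` into the set of points of `{0,…,n-1}^{2k}` with coordinate sum
`N = (k+s)n - k` (`card_A2ps`). Their number is the coefficient of `X^N` in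
`(1 + X + ⋯ + X^{n-1})^{2k} = (1 - X^n)^{2k} (1 - X)^{-2k}`, which is
`Σ_{jn ≤ N} (-1)^j C(2k,j) C(2k-1 + N - jn, 2k-1)` (`card_box_sum_eq`). For large `n` the condition
`jn ≤ N` reads `j < k+s`, and then the last binomial coefficient is
`C((k+s-j)n + k-1, 2k-1) ~ ((k+s-j)n)^{2k-1} / (2k-1)!` (`tendsto_choose_linear_div_pow`).
-/

open Finset Filter
open scoped Topology

/-- `A_{2k,s}` : the set of tuples `(i_1, …, i_{2k}) ∈ {1,…,n}^{2k}` with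
`Σ_{r=1}^{2k} (-1)^r i_r = s n` (indices `r` are `1`-based, realized here by `0`-based
`r : Fin (2k)` carrying sign `(-1)^{r+1}`). -/
def A2ps (n k : ℕ) (s : ℤ) : Finset (Fin (2 * k) → ℕ) :=
  (Fintype.piFinset fun _ : Fin (2 * k) => Finset.Icc 1 n).filter
    (fun i => ∑ r : Fin (2 * k), (-1 : ℤ) ^ ((r : ℕ) + 1) * (i r : ℤ) = s * n)

/-- Inclusion-exclusion formula for the number of points of `{0,…,n-1}^{d+1}` with coordinate sum
`N`, read off from `(1 + X + ⋯ + X^{n-1})^{d+1} = (1 - X^n)^{d+1} (1 - X)^{-(d+1)}`. -/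
lemma card_box_sum_eq (d n N : ℕ) :
    ((((Fintype.piFinset fun _ : Fin (d + 1) => range n).filter
      (fun i => ∑ r, i r = N)).card : ℕ) : ℝ) =
    ∑ j ∈ range (d + 2), (-1 : ℝ) ^ j * ((d + 1).choose j : ℝ) *
      (if j * n ≤ N then ((d + (N - j * n)).choose d : ℝ) else 0) := by
  have h1 : PowerSeries.coeff N ((∑ i ∈ range n, (PowerSeries.X : PowerSeries ℝ) ^ i) ^ (d + 1)) =
      ((((Fintype.piFinset fun _ : Fin (d + 1) => range n).filter
        (fun i => ∑ r, i r = N)).card : ℕ) : ℝ) := by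
    have := Finset.prod_univ_sum (fun _ : Fin (d + 1) => range n)
      (fun _ i => (PowerSeries.X : PowerSeries ℝ) ^ i)
    rw [Finset.prod_const, Finset.card_univ, Fintype.card_fin] at this
    rw [this, map_sum, Finset.card_filter, Nat.cast_sum]
    refine Finset.sum_congr rfl fun i _ => ?_
    rw [Finset.prod_pow_eq_pow_sum, PowerSeries.coeff_X_pow]
    simp [eq_comm]
  have h2 : (∑ i ∈ range n, (PowerSeries.X : PowerSeries ℝ) ^ i) ^ (d + 1) =
      ∑ j ∈ range (d + 2), PowerSeries.C ((-1 : ℝ) ^ j * ((d + 1).choose j : ℝ)) *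
        (PowerSeries.X ^ (j * n) * PowerSeries.mk fun m => ((d + m).choose d : ℝ)) := by
    have hinv := PowerSeries.mk_add_choose_mul_one_sub_pow_eq_one ℝ d
    have hgeom := geom_sum_mul_neg (PowerSeries.X : PowerSeries ℝ) n
    calc _ = ((∑ i ∈ range n, (PowerSeries.X : PowerSeries ℝ) ^ i) ^ (d + 1)) *
          ((PowerSeries.mk fun m => ((d + m).choose d : ℝ)) *
            (1 - PowerSeries.X) ^ (d + 1)) := by rw [hinv, mul_one]
      _ = (-PowerSeries.X ^ n + 1) ^ (d + 1) *
          (PowerSeries.mk fun m => ((d + m).choose d : ℝ)) := by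
        rw [neg_add_eq_sub, ← hgeom, mul_pow]; ring
      _ = _ := by
        rw [add_pow, Finset.sum_mul]
        refine Finset.sum_congr rfl fun j _ => ?_
        rw [neg_pow, ← pow_mul, mul_comm n j]
        simp only [map_mul, map_pow, map_neg, map_one, map_natCast, one_pow]
        ring
  rw [← h1, h2, map_sum]
  refine Finset.sum_congr rfl fun j _ => ?_
  rw [PowerSeries.coeff_C_mul, PowerSeries.coeff_X_pow_mul', PowerSeries.coeff_mk]

lemma tendsto_choose_linear_div_pow (a c d : ℕ) (ha : 1 ≤ a) :
    Tendsto (fun n : ℕ => ((a * n + c).choose d : ℝ) / (n : ℝ) ^ d) atTop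
      (𝓝 ((d.factorial : ℝ)⁻¹ * (a : ℝ) ^ d)) := by
  have hlin : Tendsto (fun n : ℕ => a * n + c) atTop atTop :=
    tendsto_atTop_mono (fun n => by simp only [id]; nlinarith) tendsto_id
  have hequiv := ((isEquivalent_choose d).comp_tendsto hlin).div
    (Asymptotics.IsEquivalent.refl (u := fun n : ℕ => (n : ℝ) ^ d))
  refine hequiv.symm.tendsto_nhds ?_
  have h0 : Tendsto (fun n : ℕ => (a : ℝ) + c / (n : ℝ)) atTop (𝓝 (a : ℝ)) := by
    simpa using (tendsto_const_div_atTop_nhds_zero_nat (c : ℝ)).const_add (a : ℝ)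
  refine ((h0.pow d).const_mul ((d.factorial : ℝ)⁻¹)).congr' ?_
  filter_upwards [eventually_gt_atTop 0] with n hn
  have hn' : (n : ℝ) ≠ 0 := by positivity
  have : (a : ℝ) + c / n = (a * n + c) / n := by field_simp
  simp only [Pi.div_apply, Function.comp, this, div_pow]
  push_cast
  ring

/-- The substitution `i ↦ n - i` at negative signs, `i ↦ i - 1` at positive signs. -/
lemma card_A2ps (n k N : ℕ) (s : ℤ) (hN : (N : ℤ) + k = (k + s) * n) :
    (A2ps n k s).card = ((Fintype.piFinset fun _ : Fin (2 * k) => range n).filter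
      (fun i => ∑ r, i r = N)).card := by
  have hshift : ∑ r : Fin (2 * k), (if Even (r : ℕ) then -(n : ℤ) else 1) = k - k * n := by
    rw [Fin.sum_univ_eq_sum_range (fun r => if Even r then -(n : ℤ) else 1)]
    clear hN
    induction k with
    | zero => simp
    | succ k ih =>
      rw [show 2 * (k + 1) = 2 * k + 1 + 1 by ring, sum_range_succ, sum_range_succ, ih]
      simp
      ring
  have hsum : ∀ i j : Fin (2 * k) → ℕ, (∀ r : Fin (2 * k), (-1 : ℤ) ^ ((r : ℕ) + 1) * (i r : ℤ) =
      (j r : ℤ) + (if Even (r : ℕ) then -(n : ℤ) else 1)) →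
      ((∑ r : Fin (2 * k), (-1 : ℤ) ^ ((r : ℕ) + 1) * (i r : ℤ) = s * n) ↔ ∑ r, j r = N) := by
    intro i j h
    rw [Finset.sum_congr rfl fun r _ => h r, sum_add_distrib, hshift, ← Nat.cast_sum, ← @Nat.cast_inj ℤ]
    constructor <;> intro h' <;> linarith
  unfold A2ps
  refine Finset.card_nbij' (fun i r => if Even (r : ℕ) then n - i r else i r - 1)
    (fun j r => if Even (r : ℕ) then n - j r else j r + 1) ?_ ?_ ?_ ?_
  · intro i hi
    simp only [coe_filter, Set.mem_ofPred_eq, Fintype.mem_piFinset, mem_Icc, mem_range] at hi ⊢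
    refine ⟨fun r => ?_, (hsum i _ fun r => ?_).1 hi.2⟩
    · have := hi.1 r
      split_ifs <;> omega
    · have := hi.1 r
      by_cases hr : Even (r : ℕ)
      · simp only [hr, if_true, pow_succ, hr.neg_one_pow]; omega
      · simp only [hr, if_false, pow_succ, (Nat.not_even_iff_odd.1 hr).neg_one_pow]; omega
  · intro j hj
    simp only [coe_filter, Set.mem_ofPred_eq, Fintype.mem_piFinset, mem_Icc, mem_range] at hj ⊢
    refine ⟨fun r => ?_, (hsum _ j fun r => ?_).2 hj.2⟩
    · have := hj.1 r
      split_ifs <;> omega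
    · have := hj.1 r
      by_cases hr : Even (r : ℕ)
      · simp only [hr, if_true, pow_succ, hr.neg_one_pow]; omega
      · simp only [hr, if_false, pow_succ, (Nat.not_even_iff_odd.1 hr).neg_one_pow]; omega
  · intro i hi
    simp only [coe_filter, Set.mem_ofPred_eq, Fintype.mem_piFinset, mem_Icc] at hi
    funext r
    have := hi.1 r
    dsimp only
    split_ifs <;> omega
  · intro j hj
    simp only [coe_filter, Set.mem_ofPred_eq, Fintype.mem_piFinset, mem_range] at hj
    funext r
    have := hj.1 r
    dsimp only
    split_ifs <;> omega

/-- **Asymptotics of `|A_{2k,s}|`.** For every `k ≥ 1` and `-(k-1) ≤ s ≤ k-1`,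
`|A_{2k,s}| / n^{2k-1} → (1/(2k-1)!) Σ_{j=0}^{k+s-1} (-1)^j C(2k,j) (k+s-j)^{2k-1}`
as `n → ∞`. -/
theorem limit_card_A2ps (k : ℕ) (hk : 1 ≤ k) (s : ℤ)
    (hs₁ : -(k : ℤ) + 1 ≤ s) (hs₂ : s ≤ (k : ℤ) - 1) :
    Tendsto (fun n : ℕ => ((A2ps n k s).card : ℝ) / (n : ℝ) ^ (2 * k - 1)) atTop
      (𝓝 ((((2 * k - 1).factorial : ℝ))⁻¹ *
        ∑ j ∈ Finset.range (((k : ℤ) + s).toNat),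
          (-1 : ℝ) ^ j * ((2 * k).choose j : ℝ) *
            ((k : ℝ) + (s : ℝ) - (j : ℝ)) ^ (2 * k - 1))) := by
  obtain ⟨t, ht⟩ : ∃ t : ℕ, (k : ℤ) + s = t := ⟨((k : ℤ) + s).toNat, by omega⟩
  have htR : (k : ℝ) + (s : ℝ) = t := by exact_mod_cast ht
  obtain ⟨d, hd⟩ : ∃ d, 2 * k = d + 1 := ⟨2 * k - 1, by omega⟩
  rw [ht, Int.toNat_natCast, htR, mul_sum]
  have hlim : Tendsto (fun n : ℕ => ∑ j ∈ range t, (-1 : ℝ) ^ j * ((2 * k).choose j : ℝ) *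
      ((((t - j) * n + (k - 1)).choose (2 * k - 1) : ℝ) / (n : ℝ) ^ (2 * k - 1))) atTop
      (𝓝 (∑ j ∈ range t, ((2 * k - 1).factorial : ℝ)⁻¹ * ((-1 : ℝ) ^ j * ((2 * k).choose j : ℝ) *
        ((t : ℝ) - (j : ℝ)) ^ (2 * k - 1)))) := by
    refine tendsto_finsetSum _ fun j hj => ?_
    have hjt : j < t := mem_range.1 hj
    have := (tendsto_choose_linear_div_pow (t - j) (k - 1) (2 * k - 1) (by omega)).const_mul
      ((-1 : ℝ) ^ j * ((2 * k).choose j : ℝ))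
    rw [Nat.cast_sub hjt.le] at this
    convert this using 2
    ring
  refine hlim.congr' ?_
  filter_upwards [eventually_ge_atTop (k + 1)] with n hn
  have htn : k ≤ t * n := by nlinarith
  rw [card_A2ps n k (t * n - k) s (by rw [ht]; push_cast [htn]; ring)]
  have hbox := card_box_sum_eq d n (t * n - k)
  rw [← hd] at hbox
  rw [hbox, sum_div, show d + 2 = 2 * k + 1 by omega, show d = 2 * k - 1 by omega]
  symm
  -- the terms with `j ≥ t` vanish because then `t * n - k < j * n`
  rw [← Finset.sum_subset (Finset.range_subset_range.2 (show t ≤ 2 * k + 1 by omega))]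
  · refine Finset.sum_congr rfl fun j hj => ?_
    have hjt : j + 1 ≤ t := mem_range.1 hj
    obtain ⟨a, rfl⟩ := Nat.exists_eq_add_of_le hjt
    have e1 : (j + 1 + a) * n = j * n + (1 + a) * n := by ring
    have e2 : n ≤ (1 + a) * n := by nlinarith
    rw [if_pos (by omega), mul_div_assoc]
    congr 4
    rw [show j + 1 + a - j = 1 + a by omega]
    omega
  · intro j _ hj
    have hjt : t ≤ j := by simpa using hj
    have : t * n ≤ j * n := Nat.mul_le_mul_right n hjt
    have : 0 < t * n := by omega
    rw [if_neg (by omega)]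
    simp
end

section
/- Let p, q ≥ 1 and let I'_1 be the set of pairs (I, J) ∈ A_{2p} × A_{2q} such that the multiset intersection S_I ∩ S_J has cardinality exactly one and every element of the combined multiset S_I ∪ S_J has total multiplicity (counted with repetitions) at least two. Then |I'_1| = O(n^{p+q−2}) as n → ∞. -/
/-!
If `(I, J) ∈ I'_1`, then `S_I ∩ S_J = {v}` for a single value `v`, which occurs exactly once in
`S_I` or exactly once in `S_J`; by symmetry suppose it occurs exactly once in `S_I`. Every other
value lies in only one of the two multisets and so has multiplicity at least two there. As `v`
takes up at least one place in each, there are at most `p - 1` other values in `S_I` and at most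
`q - 1` in `S_J` (`card_erase_le`), that is, at most `p + q - 2` values besides `v`.

The pair is therefore described by these values (at most `n ^ (p + q - 2)` choices), by the
pattern in which they occur (a number of choices independent of `n`), and by `v`. But `v` has
coefficient `±1` in the congruence defining `A_{2p}`, so the congruence determines `v` modulo
`n`, hence in `{1, …, n}`, from the rest (`entry_unique`). This gives `card_T1_le`.
-/

open Finset Filter Asymptotics

/-- The multiset `S_I` of entries of a tuple `I`. -/
def entriesM {m : ℕ} (I : Fin m → ℕ) : Multiset ℕ :=
  Multiset.map I Finset.univ.val

/-- `A_{2p}` : the set of tuples `(i_1, …, i_{2p}) ∈ {1,…,n}^{2p}` with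
`Σ_{k=1}^{2p} (-1)^k i_k ≡ 0 (mod n)`. -/
def A2p (n p : ℕ) : Finset (Fin (2 * p) → ℕ) :=
  (Fintype.piFinset fun _ : Fin (2 * p) => Finset.Icc 1 n).filter
    (fun i => (∑ k : Fin (2 * p), (-1 : ℤ) ^ ((k : ℕ) + 1) * (i k : ℤ)) % n = 0)

/-- `I'_1` : the set of pairs `(I, J) ∈ A_{2p} × A_{2q}` such that the multiset
intersection `S_I ∩ S_J` has cardinality exactly one and every element of the combined
multiset `S_I ∪ S_J` has total multiplicity at least two. -/
def I1' (n p q : ℕ) : Finset ((Fin (2 * p) → ℕ) × (Fin (2 * q) → ℕ)) :=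
  ((A2p n p) ×ˢ (A2p n q)).filter
    (fun IJ => Multiset.card (entriesM IJ.1 ∩ entriesM IJ.2) = 1 ∧
      ∀ v ∈ entriesM IJ.1 + entriesM IJ.2,
        2 ≤ (entriesM IJ.1 + entriesM IJ.2).count v)

open Classical in
/-- The pairs of `I'_1` for which some common value occurs exactly once in the first tuple. -/
noncomputable def T1 (n p q : ℕ) : Finset ((Fin (2 * p) → ℕ) × (Fin (2 * q) → ℕ)) :=
  (I1' n p q).filter
    (fun IJ => ∃ v, (entriesM IJ.1).count v = 1 ∧ v ∈ entriesM IJ.2)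

lemma card_entriesM {m : ℕ} (I : Fin m → ℕ) : Multiset.card (entriesM I) = m := by
  simp [entriesM]

lemma mem_entriesM {m : ℕ} {I : Fin m → ℕ} {v : ℕ} : v ∈ entriesM I ↔ ∃ k, I k = v := by
  simp [entriesM]

lemma existsUnique_of_count_eq_one {m : ℕ} {I : Fin m → ℕ} {v : ℕ}
    (h : (entriesM I).count v = 1) : ∃ k₀, ∀ k, I k = v ↔ k = k₀ := by
  have h1 : (Finset.univ.filter (fun k => v = I k)).card = 1 := by
    rw [← h, entriesM, Multiset.count_map]; rfl
  obtain ⟨k₀, hk⟩ := Finset.card_eq_one.mp h1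
  refine ⟨k₀, fun k => ?_⟩
  have := congrArg (fun s => k ∈ s) hk
  simpa [eq_comm] using this

/-- A multiset of size `2p` containing `v`, all of whose other elements are repeated, has at most
`p - 1` other values. -/
lemma card_erase_le {S : Multiset ℕ} {p v : ℕ} (hS : Multiset.card S = 2 * p) (hv : v ∈ S)
    (h : ∀ w ∈ S, w ≠ v → 2 ≤ S.count w) : (S.toFinset.erase v).card ≤ p - 1 := by
  have h1 := Multiset.toFinset_sum_count_eq S
  have hv' : v ∈ S.toFinset := Multiset.mem_toFinset.mpr hv
  rw [← Finset.add_sum_erase _ _ hv', hS] at h1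
  have h2 : (S.toFinset.erase v).card * 2 ≤ ∑ w ∈ S.toFinset.erase v, S.count w := by
    rw [← smul_eq_mul]
    refine Finset.card_nsmul_le_sum _ _ _ fun w hw => ?_
    rw [Finset.mem_erase, Multiset.mem_toFinset] at hw
    exact h w hw.2 hw.1
  have h3 : 1 ≤ S.count v := Multiset.one_le_count_iff_mem.mpr hv
  omega

lemma exists_enum {n m : ℕ} (hn : 1 ≤ n) (W : Finset ℕ) (hW : ∀ x ∈ W, x ∈ Finset.Icc 1 n)
    (hm : W.card ≤ m) :
    ∃ w : Fin m → ℕ, (∀ j, w j ∈ Finset.Icc 1 n) ∧ ∀ x ∈ W, ∃ j, w j = x := by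
  refine ⟨fun j => if h : (j : ℕ) < W.card then (W.equivFin.symm ⟨j, h⟩ : ℕ) else 1, ?_, ?_⟩
  · intro j
    dsimp only
    split_ifs with h
    · exact hW _ (W.equivFin.symm ⟨j, h⟩).2
    · simpa using hn
  · intro x hx
    refine ⟨⟨W.equivFin ⟨x, hx⟩, (W.equivFin ⟨x, hx⟩).2.trans_le hm⟩, ?_⟩
    simp

/-- Two tuples of `A_{2p}` that agree off one position agree at that position as well. -/
lemma entry_unique {n p : ℕ} {I I' : Fin (2 * p) → ℕ} (hI : I ∈ A2p n p) (hI' : I' ∈ A2p n p)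
    (k₀ : Fin (2 * p)) (h : ∀ k, k ≠ k₀ → I k = I' k) : I k₀ = I' k₀ := by
  simp only [A2p, Finset.mem_filter, Fintype.mem_piFinset, Finset.mem_Icc] at hI hI'
  have d1 := Int.dvd_of_emod_eq_zero hI.2
  have d2 := Int.dvd_of_emod_eq_zero hI'.2
  have d := dvd_sub d1 d2
  rw [← Finset.sum_sub_distrib, Finset.sum_eq_single k₀ (by
    intro k _ hk; rw [h k hk, sub_self]) (by simp), ← mul_sub] at d
  have d3 : (n : ℤ) ∣ (I k₀ : ℤ) - I' k₀ := by
    rcases neg_one_pow_eq_or ℤ ((k₀ : ℕ) + 1) with e | e <;> rw [e] at d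
    · simpa using d
    · rw [neg_one_mul] at d
      exact (dvd_neg.mp d)
  have b1 := hI.1 k₀
  have b2 := hI'.1 k₀
  have := Int.eq_zero_of_abs_lt_dvd d3 (by rw [abs_lt]; omega)
  omega

/-- The relation between a pair of tuples and its description: a position `k₀` of the first tuple,
the patterns assigning to each position either `none` (the entry equals the one at `k₀`) or
`some j` (the entry is the `j`-th of the remaining values), and the list of remaining values. -/
def Describes {a b m : ℕ} (IJ : (Fin a → ℕ) × (Fin b → ℕ))
    (d : (Fin a × (Fin a → Option (Fin m)) × (Fin b → Option (Fin m))) × (Fin m → ℕ)) : Prop :=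
  (∀ k, IJ.1 k = (d.1.2.1 k).elim (IJ.1 d.1.1) d.2) ∧
  (∀ k, IJ.2 k = (d.1.2.2 k).elim (IJ.1 d.1.1) d.2) ∧
  ∀ k, d.1.2.1 k = none → k = d.1.1

lemma exists_pattern {a m v : ℕ} (I : Fin a → ℕ) (w : Fin m → ℕ)
    (h : ∀ x ∈ (entriesM I).toFinset.erase v, ∃ j, w j = x) :
    ∃ g : Fin a → Option (Fin m), (∀ k, I k = (g k).elim v w) ∧ ∀ k, g k = none → I k = v := by
  have : ∀ k, ∃ o : Option (Fin m), I k = o.elim v w ∧ (o = none → I k = v) := by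
    intro k
    by_cases hk : I k = v
    · exact ⟨none, by simpa using hk, fun _ => hk⟩
    · obtain ⟨j, hj⟩ := h (I k) (by simp [hk, mem_entriesM])
      exact ⟨some j, by simpa using hj.symm, by simp⟩
  choose g hg using this
  exact ⟨g, fun k => (hg k).1, fun k => (hg k).2⟩

lemma exists_describes {n p q : ℕ} (hp : 1 ≤ p) (hq : 1 ≤ q) (hn : 1 ≤ n)
    {IJ : (Fin (2 * p) → ℕ) × (Fin (2 * q) → ℕ)} (h : IJ ∈ T1 n p q) :
    ∃ d ∈ (Finset.univ : Finset (Fin (2 * p) × (Fin (2 * p) → Option (Fin (p + q - 2))) ×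
        (Fin (2 * q) → Option (Fin (p + q - 2))))) ×ˢ
        Fintype.piFinset (fun _ : Fin (p + q - 2) => Finset.Icc 1 n), Describes IJ d := by
  obtain ⟨I, J⟩ := IJ
  simp only [T1, I1', A2p, Finset.mem_filter, Finset.mem_product, Fintype.mem_piFinset] at h
  obtain ⟨⟨⟨⟨hI, -⟩, hJ, -⟩, hc, hm⟩, v, hv, hvJ⟩ := h
  have hvI : v ∈ entriesM I := Multiset.one_le_count_iff_mem.mp hv.ge
  obtain ⟨u, hu⟩ := Multiset.card_eq_one.mp hc
  have huv : v = u := by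
    have : v ∈ entriesM I ∩ entriesM J := Multiset.mem_inter.mpr ⟨hvI, hvJ⟩
    simpa [hu] using this
  subst huv
  have hdisj : ∀ x, x ∈ entriesM I → x ∈ entriesM J → x = v := by
    intro x h1 h2
    have : x ∈ entriesM I ∩ entriesM J := Multiset.mem_inter.mpr ⟨h1, h2⟩
    simpa [hu] using this
  have cI : ((entriesM I).toFinset.erase v).card ≤ p - 1 := by
    refine card_erase_le (card_entriesM I) hvI fun x hx hxv => ?_
    have h1 := hm x (Multiset.mem_add.mpr (Or.inl hx))
    have h2 : (entriesM J).count x = 0 :=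
      Multiset.count_eq_zero.mpr fun hxJ => hxv (hdisj x hx hxJ)
    rwa [Multiset.count_add, h2, add_zero] at h1
  have cJ : ((entriesM J).toFinset.erase v).card ≤ q - 1 := by
    refine card_erase_le (card_entriesM J) hvJ fun x hx hxv => ?_
    have h1 := hm x (Multiset.mem_add.mpr (Or.inr hx))
    have h2 : (entriesM I).count x = 0 :=
      Multiset.count_eq_zero.mpr fun hxI => hxv (hdisj x hxI hx)
    rwa [Multiset.count_add, h2, zero_add] at h1
  obtain ⟨w, hw, hws⟩ := exists_enum (m := p + q - 2) hn
    ((entriesM I).toFinset.erase v ∪ (entriesM J).toFinset.erase v)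
    (by
      intro x hx
      rw [Finset.mem_union, Finset.mem_erase, Finset.mem_erase, Multiset.mem_toFinset,
        Multiset.mem_toFinset, mem_entriesM, mem_entriesM] at hx
      rcases hx with ⟨-, k, rfl⟩ | ⟨-, k, rfl⟩
      · exact hI k
      · exact hJ k)
    ((Finset.card_union_le _ _).trans (by omega))
  obtain ⟨k₀, hk₀⟩ := existsUnique_of_count_eq_one hv
  obtain ⟨g, hg, hg'⟩ := exists_pattern (v := v) I w
    fun x hx => hws x (Finset.mem_union_left _ hx)
  obtain ⟨g₂, hg₂, -⟩ := exists_pattern (v := v) J w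
    fun x hx => hws x (Finset.mem_union_right _ hx)
  have hIk : I k₀ = v := (hk₀ k₀).mpr rfl
  refine ⟨((k₀, g, g₂), w), by simpa using hw, ?_, ?_, ?_⟩
  · simpa only [hIk] using hg
  · simpa only [hIk] using hg₂
  · exact fun k hk => (hk₀ k).mp (hg' k hk)

lemma describes_unique {n p b m : ℕ} {IJ IJ' : (Fin (2 * p) → ℕ) × (Fin b → ℕ)}
    {d : (Fin (2 * p) × (Fin (2 * p) → Option (Fin m)) × (Fin b → Option (Fin m))) ×
      (Fin m → ℕ)} (hI : IJ.1 ∈ A2p n p) (hI' : IJ'.1 ∈ A2p n p)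
    (h : Describes IJ d) (h' : Describes IJ' d) : IJ = IJ' := by
  obtain ⟨h1, h2, h3⟩ := h
  obtain ⟨h1', h2', -⟩ := h'
  have key : IJ.1 d.1.1 = IJ'.1 d.1.1 := by
    refine entry_unique hI hI' _ fun k hk => ?_
    rw [h1 k, h1' k]
    cases e : d.1.2.1 k with
    | none => exact absurd (h3 k e) hk
    | some j => rfl
  refine Prod.ext (funext fun k => ?_) (funext fun k => ?_)
  · rw [h1 k, h1' k, key]
  · rw [h2 k, h2' k, key]

lemma card_T1_le (p q : ℕ) (hp : 1 ≤ p) (hq : 1 ≤ q) :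
    ∃ C : ℕ, ∀ n, 1 ≤ n → (T1 n p q).card ≤ C * n ^ (p + q - 2) := by
  refine ⟨Fintype.card (Fin (2 * p) × (Fin (2 * p) → Option (Fin (p + q - 2))) ×
        (Fin (2 * q) → Option (Fin (p + q - 2)))), fun n hn => ?_⟩
  have := Finset.card_le_card_of_forall_subsingleton Describes
    (fun IJ h => exists_describes hp hq hn h) (by
      rintro d - x ⟨hx, hxd⟩ y ⟨hy, hyd⟩
      simp only [T1, I1', Finset.mem_filter, Finset.mem_product] at hx hy
      exact describes_unique hx.1.1.1 hy.1.1.1 hxd hyd)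
  simpa only [Finset.card_product, Finset.card_univ, Fintype.card_piFinset, Finset.prod_const,
    Nat.card_Icc, Fintype.card_fin, Nat.add_sub_cancel] using this

lemma swap_mem_I1' {n p q : ℕ} {IJ : (Fin (2 * p) → ℕ) × (Fin (2 * q) → ℕ)}
    (h : IJ ∈ I1' n p q) : IJ.swap ∈ I1' n q p := by
  simp only [I1', Finset.mem_filter, Finset.mem_product, Prod.fst_swap, Prod.snd_swap] at h ⊢
  rw [Multiset.inter_comm, add_comm (entriesM IJ.2)]
  exact ⟨h.1.symm, h.2⟩

lemma mem_T1_or_swap {n p q : ℕ} {IJ : (Fin (2 * p) → ℕ) × (Fin (2 * q) → ℕ)}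
    (h : IJ ∈ I1' n p q) : IJ ∈ T1 n p q ∨ IJ.swap ∈ T1 n q p := by
  classical
  have hs := swap_mem_I1' h
  have hc := (Finset.mem_filter.mp h).2.1
  obtain ⟨v, hv⟩ := Multiset.card_eq_one.mp hc
  have hmem : v ∈ entriesM IJ.1 ∩ entriesM IJ.2 := by simp [hv]
  have hmem' := Multiset.mem_inter.mp hmem
  have hcount : min ((entriesM IJ.1).count v) ((entriesM IJ.2).count v) = 1 := by
    rw [← Multiset.count_inter, hv, Multiset.count_singleton_self]
  rcases min_choice ((entriesM IJ.1).count v) ((entriesM IJ.2).count v) with e | e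
  · exact Or.inl (Finset.mem_filter.mpr ⟨h, v, e.symm.trans hcount, hmem'.2⟩)
  · exact Or.inr (Finset.mem_filter.mpr ⟨hs, v, e.symm.trans hcount, hmem'.1⟩)

lemma card_I1'_le (n p q : ℕ) : (I1' n p q).card ≤ (T1 n p q).card + (T1 n q p).card := by
  classical
  have hsub : I1' n p q ⊆ T1 n p q ∪ (T1 n q p).image Prod.swap := by
    intro IJ h
    rw [Finset.mem_union, Finset.mem_image]
    exact (mem_T1_or_swap h).imp_right fun h => ⟨_, h, Prod.swap_swap IJ⟩
  calc _ ≤ _ := Finset.card_le_card hsub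
    _ ≤ _ := Finset.card_union_le _ _
    _ ≤ _ := Nat.add_le_add_left Finset.card_image_le _

/-- **Cardinality bound for `I'_1`.** For `p, q ≥ 1`, `|I'_1| = O(n^{p+q-2})` as
`n → ∞`. -/
theorem card_I1' (p q : ℕ) (hp : 1 ≤ p) (hq : 1 ≤ q) :
    (fun n : ℕ => ((I1' n p q).card : ℝ)) =O[atTop]
      (fun n : ℕ => (n : ℝ) ^ (p + q - 2)) := by
  obtain ⟨C, hC⟩ := card_T1_le p q hp hq
  obtain ⟨D, hD⟩ := card_T1_le q p hq hp
  refine IsBigO.of_bound ((C + D : ℕ) : ℝ) ?_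
  filter_upwards [eventually_ge_atTop 1] with n hn
  have h1 := hC n hn
  have h2 := hD n hn
  rw [add_comm q p] at h2
  have h3 : (I1' n p q).card ≤ (C + D) * n ^ (p + q - 2) := by
    have := card_I1'_le n p q
    rw [add_mul]
    omega
  rw [Real.norm_of_nonneg (by positivity), Real.norm_of_nonneg (by positivity)]
  exact_mod_cast h3
end
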